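/- The subgroup of GL(2,ℂ) generated by the matrices g₂ and g₃ is isomorphic to SL(2, 𝔽₃); in particular, it is a finite group of order 24. -/

import Mathlib

noncomputable section

/-- ζ = (1 + √3·i)/2, a primitive sixth root of unity. -/
def ζ : ℂ := (1 + (Real.sqrt 3 : ℂ) * Complex.I) / 2

/-- The Eisenstein integers `ℤ[ζ]`, with `ζ² = -1 + ζ`. -/
abbrev EisR := QuadraticAlgebra ℤ (-1) 1

/-- The 24 matrices of the group, indexed by the base-3 encoding of their reduction mod `√-3`. -/
def tab : ℕ → Matrix (Fin 2) (Fin 2) EisR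
  | 15 => !![⟨0, 0⟩, ⟨0, -1⟩; ⟨1, -1⟩, ⟨0, 0⟩]
  | 16 => !![⟨0, 0⟩, ⟨-1, 1⟩; ⟨1, -1⟩, ⟨-1, 1⟩]
  | 17 => !![⟨0, 0⟩, ⟨1, 0⟩; ⟨1, -1⟩, ⟨0, 1⟩]
  | 21 => !![⟨0, 0⟩, ⟨0, 1⟩; ⟨-1, 1⟩, ⟨0, 0⟩]
  | 22 => !![⟨0, 0⟩, ⟨-1, 0⟩; ⟨-1, 1⟩, ⟨0, -1⟩]
  | 23 => !![⟨0, 0⟩, ⟨1, -1⟩; ⟨-1, 1⟩, ⟨1, -1⟩]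
  | 28 => !![⟨1, 0⟩, ⟨0, 0⟩; ⟨0, 0⟩, ⟨1, 0⟩]
  | 31 => !![⟨0, -1⟩, ⟨0, 0⟩; ⟨0, -1⟩, ⟨1, 0⟩]
  | 34 => !![⟨-1, 1⟩, ⟨0, 0⟩; ⟨-1, 0⟩, ⟨1, 0⟩]
  | 37 => !![⟨1, 0⟩, ⟨-1, 1⟩; ⟨0, 0⟩, ⟨-1, 1⟩]
  | 41 => !![⟨0, -1⟩, ⟨1, 0⟩; ⟨0, -1⟩, ⟨0, 1⟩]
  | 42 => !![⟨-1, 1⟩, ⟨0, -1⟩; ⟨-1, 0⟩, ⟨0, 0⟩]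
  | 46 => !![⟨1, 0⟩, ⟨-1, 0⟩; ⟨0, 0⟩, ⟨0, -1⟩]
  | 48 => !![⟨0, -1⟩, ⟨0, 1⟩; ⟨0, -1⟩, ⟨0, 0⟩]
  | 53 => !![⟨-1, 1⟩, ⟨1, -1⟩; ⟨-1, 0⟩, ⟨1, -1⟩]
  | 56 => !![⟨-1, 0⟩, ⟨0, 0⟩; ⟨0, 0⟩, ⟨-1, 0⟩]
  | 59 => !![⟨1, -1⟩, ⟨0, 0⟩; ⟨1, 0⟩, ⟨-1, 0⟩]
  | 62 => !![⟨0, 1⟩, ⟨0, 0⟩; ⟨0, 1⟩, ⟨-1, 0⟩]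
  | 65 => !![⟨-1, 0⟩, ⟨1, 0⟩; ⟨0, 0⟩, ⟨0, 1⟩]
  | 67 => !![⟨1, -1⟩, ⟨-1, 1⟩; ⟨1, 0⟩, ⟨-1, 1⟩]
  | 69 => !![⟨0, 1⟩, ⟨0, -1⟩; ⟨0, 1⟩, ⟨0, 0⟩]
  | 74 => !![⟨-1, 0⟩, ⟨1, -1⟩; ⟨0, 0⟩, ⟨1, -1⟩]
  | 75 => !![⟨1, -1⟩, ⟨0, 1⟩; ⟨1, 0⟩, ⟨0, 0⟩]
  | 79 => !![⟨0, 1⟩, ⟨-1, 0⟩; ⟨0, 1⟩, ⟨0, -1⟩]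
  | _ => 0

abbrev SL23 := Matrix.SpecialLinearGroup (Fin 2) (ZMod 3)

def rho (M : SL23) : Matrix (Fin 2) (Fin 2) EisR :=
  tab (27 * (M.1 0 0).val + 9 * (M.1 0 1).val + 3 * (M.1 1 0).val + (M.1 1 1).val)

def sa : SL23 := ⟨!![2, 2; 2, 1], by decide⟩
def sb : SL23 := ⟨!![0, 1; 2, 1], by decide⟩

lemma rho_one : rho 1 = 1 := by decide +kernel

lemma rho_mul : ∀ M N : SL23, rho (M * N) = rho M * rho N := by decide +kernel

lemma rho_inj : ∀ M : SL23, rho M = 1 → M = 1 := by decide +kernel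

lemma rho_sa : rho sa = !![⟨0, 1⟩, ⟨-1, 0⟩; ⟨0, 1⟩, ⟨0, -1⟩] := by decide +kernel
lemma rho_sb : rho sb = !![⟨0, 0⟩, ⟨-1, 1⟩; ⟨1, -1⟩, ⟨-1, 1⟩] := by decide +kernel

lemma sl_words : ∀ M : SL23, ∃ i : Fin 2, ∃ j k : Fin 6, ∃ l : Fin 2,
    M = sb ^ (j : ℕ) * sa ^ (i : ℕ) * sb ^ (k : ℕ) * sa ^ (l : ℕ) := by decide +kernel

lemma sl_card : Fintype.card SL23 = 24 := by decide +kernel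

lemma sl_closure : Subgroup.closure {sa, sb} = (⊤ : Subgroup SL23) := by
  rw [eq_top_iff]
  rintro M -
  have ha : sa ∈ Subgroup.closure {sa, sb} := Subgroup.subset_closure (by simp)
  have hb : sb ∈ Subgroup.closure {sa, sb} := Subgroup.subset_closure (by simp)
  obtain ⟨i, j, k, l, rfl⟩ := sl_words M
  exact mul_mem (mul_mem (mul_mem (pow_mem hb _) (pow_mem ha _)) (pow_mem hb _)) (pow_mem ha _)

lemma zeta_sq : ζ * ζ = (-1 : ℤ) • 1 + (1 : ℤ) • ζ := by
  have h3 : ((Real.sqrt 3 : ℝ) : ℂ) ^ 2 = 3 := by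
    rw [← Complex.ofReal_pow, Real.sq_sqrt (by norm_num)]; norm_num
  simp only [ζ, neg_smul, one_smul]
  linear_combination (-(1/4 : ℂ)) * h3 + (((Real.sqrt 3 : ℝ) : ℂ) ^ 2 / 4) * Complex.I_sq

/-- The embedding `ℤ[ζ] → ℂ`. -/
def emb : EisR →ₐ[ℤ] ℂ := QuadraticAlgebra.lift ⟨ζ, zeta_sq⟩

lemma emb_apply (x y : ℤ) : emb ⟨x, y⟩ = x + y * ζ := by
  simp [emb, QuadraticAlgebra.lift]

lemma emb_inj : Function.Injective emb := by
  rw [injective_iff_map_eq_zero]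
  rintro ⟨x, y⟩ h
  rw [emb_apply] at h
  have him := congrArg Complex.im h
  have hy : y = 0 := by simpa [ζ] using him
  subst hy
  have hx : x = 0 := by simpa using h
  subst hx
  rfl

def Phi0 : SL23 →* Matrix (Fin 2) (Fin 2) ℂ :=
  (emb.toRingHom.mapMatrix : Matrix (Fin 2) (Fin 2) EisR →+* _).toMonoidHom.comp
    { toFun := rho, map_one' := rho_one, map_mul' := rho_mul }

def Phi : SL23 →* Matrix.GeneralLinearGroup (Fin 2) ℂ := Phi0.toHomUnits

lemma Phi_coe (M : SL23) :
    (Phi M : Matrix (Fin 2) (Fin 2) ℂ) = (rho M).map emb := rfl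

lemma Phi_inj : Function.Injective Phi := by
  rw [injective_iff_map_eq_one]
  intro M h
  apply rho_inj
  have h1 : (rho M).map emb = 1 := by rw [← Phi_coe, h]; rfl
  apply Matrix.map_injective emb_inj
  change (rho M).map emb = (1 : Matrix (Fin 2) (Fin 2) EisR).map emb
  rw [h1, Matrix.map_one _ (map_zero _) (map_one _)]

lemma Phi_range : Phi.range = Subgroup.closure {Phi sa, Phi sb} := by
  rw [MonoidHom.range_eq_map, ← sl_closure, MonoidHom.map_closure, Set.image_pair]





/-- The subgroup of GL(2,ℂ) generated by g₂ = [[ζ,−1],[ζ,−ζ]] and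
g₃ = [[0,ζ−1],[1−ζ,ζ−1]] is isomorphic to SL(2,𝔽₃); in particular it has order 24. -/
theorem stmt11 :
    ∃ G2 G3 : Matrix.GeneralLinearGroup (Fin 2) ℂ,
      (G2 : Matrix (Fin 2) (Fin 2) ℂ) = !![ζ, -1; ζ, -ζ] ∧
      (G3 : Matrix (Fin 2) (Fin 2) ℂ) = !![0, ζ - 1; 1 - ζ, ζ - 1] ∧
      Nonempty
        ((Subgroup.closure {G2, G3}) ≃* Matrix.SpecialLinearGroup (Fin 2) (ZMod 3)) ∧
      Nat.card (Subgroup.closure {G2, G3}) = 24 := by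
  
  have e : SL23 ≃* Subgroup.closure {Phi sa, Phi sb} :=
    (MonoidHom.ofInjective Phi_inj).trans (MulEquiv.subgroupCongr Phi_range)
  refine ⟨Phi sa, Phi sb, ?_, ?_, ⟨e.symm⟩, ?_⟩
  · rw [Phi_coe, rho_sa]
    ext i j
    fin_cases i <;> fin_cases j <;> simp [emb_apply]
  · rw [Phi_coe, rho_sb]
    ext i j
    fin_cases i <;> fin_cases j <;> simp [emb_apply] <;> ring
  · rw [← Nat.card_congr e.toEquiv, Nat.card_eq_fintype_card, sl_card]
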